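/- arXiv:1605.04100 — 4 statements merged into one kernel-verified Lean document; each statement's English description precedes it below -/
import Mathlib

section
/- Let X be a strictly convex normed linear space and let A be a nonempty bounded subset of X. If A is uniquely remotal, then the closure of A is also uniquely remotal. -/
open Filter Topology

/-- The farthest distance of `x` from the set `A`: `D(x,A) = sup_{a ∈ A} ‖x - a‖`. -/
noncomputable def farDist {X : Type*} [NormedAddCommGroup X] (x : X) (A : Set X) : ℝ :=
  sSup ((fun a => ‖x - a‖) '' A)

/-- `F(x,A) = {a ∈ A : ‖x - a‖ = D(x,A)}`, the farthest points of `A` from `x`. -/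
def farPoints {X : Type*} [NormedAddCommGroup X] (x : X) (A : Set X) : Set X :=
  {a ∈ A | ‖x - a‖ = farDist x A}

/-- `A` is remotal if `F(x,A)` is nonempty for every `x`. -/
def Remotal {X : Type*} [NormedAddCommGroup X] (A : Set X) : Prop :=
  ∀ x : X, (farPoints x A).Nonempty

/-- `A` is uniquely remotal if `F(x,A)` is a singleton for every `x`. -/
def UniquelyRemotal {X : Type*} [NormedAddCommGroup X] (A : Set X) : Prop :=
  ∀ x : X, ∃ a : X, farPoints x A = {a}

/-- A sequence in `S` is maximizing if `‖x - a n‖ → D(x,S)` for some `x ∈ X`. -/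
def MaximizingSeq {X : Type*} [NormedAddCommGroup X] (S : Set X) (a : ℕ → X) : Prop :=
  (∀ n, a n ∈ S) ∧ ∃ x : X, Tendsto (fun n => ‖x - a n‖) atTop (𝓝 (farDist x S))

/-- `S` is M-compact if every maximizing sequence in `S` has a subsequence converging in `X`. -/
def MCompact {X : Type*} [NormedAddCommGroup X] (S : Set X) : Prop :=
  ∀ a : ℕ → X, MaximizingSeq S a →
    ∃ (φ : ℕ → ℕ) (l : X), StrictMono φ ∧ Tendsto (a ∘ φ) atTop (𝓝 l)

/-- `Far(A) = {a ∈ A : a ∈ F(x,A) for some x ∈ X}`. -/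
def farSet {X : Type*} [NormedAddCommGroup X] (A : Set X) : Set X :=
  {a : X | ∃ x : X, a ∈ farPoints x A}

-- We use Mathlib's `derivedSet A = {x | AccPt x (𝓟 A)}` for the set of limit points.

theorem norm_sub_le_farDist {X : Type*} [NormedAddCommGroup X] {A : Set X}
    (hbd : Bornology.IsBounded A) (x : X) {a : X} (ha : a ∈ A) : ‖x - a‖ ≤ farDist x A := by
  refine le_csSup ?_ (Set.mem_image_of_mem _ ha)
  obtain ⟨C, hC⟩ := hbd.exists_norm_le
  refine ⟨‖x‖ + C, ?_⟩
  rintro _ ⟨b, hb, rfl⟩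
  exact (norm_sub_le x b).trans (by gcongr; exact hC b hb)

theorem farDist_closure {X : Type*} [NormedAddCommGroup X] {A : Set X} (hne : A.Nonempty)
    (hbd : Bornology.IsBounded A) (x : X) : farDist x (closure A) = farDist x A := by
  apply le_antisymm
  · refine csSup_le (hne.closure.image _) ?_
    rintro _ ⟨b, hb, rfl⟩
    have hclosed : IsClosed {y : X | ‖x - y‖ ≤ farDist x A} :=
      isClosed_le (by fun_prop) continuous_const
    exact closure_minimal (fun y hy => norm_sub_le_farDist hbd x hy) hclosed hb
  · refine csSup_le (hne.image _) ?_
    rintro _ ⟨b, hb, rfl⟩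
    exact norm_sub_le_farDist hbd.closure x (subset_closure hb)

/-- In a strictly convex space, closing up a bounded remotal set adds no farthest points:
a farthest point `b` from `x` is the only candidate for a farthest point from `x + (x - b)`. -/
theorem Remotal.farPoints_closure {X : Type*} [NormedAddCommGroup X] [NormedSpace ℝ X]
    [StrictConvexSpace ℝ X] {A : Set X} (hrem : Remotal A) (hbd : Bornology.IsBounded A) (x : X) :
    farPoints x (closure A) = farPoints x A := by
  have hne : A.Nonempty := (hrem x).mono fun _ h => h.1
  ext b
  simp only [farPoints, Set.mem_ofPred_eq, farDist_closure hne hbd]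
  refine ⟨fun ⟨hb, hbx⟩ => ⟨?_, hbx⟩, fun ⟨hb, hbx⟩ => ⟨subset_closure hb, hbx⟩⟩
  obtain ⟨a, ha, hax⟩ := hrem (x + (x - b))
  have hfar : ‖x + (x - b) - b‖ ≤ ‖x + (x - b) - a‖ := by
    rw [hax, ← farDist_closure hne hbd]
    exact norm_sub_le_farDist hbd.closure _ hb
  have hdouble : ‖x + (x - b) - b‖ = 2 * ‖x - b‖ := by
    rw [show x + (x - b) - b = (2 : ℝ) • (x - b) by module, norm_smul]
    norm_num
  rw [show x + (x - b) - a = (x - a) + (x - b) by abel] at hfar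
  have hle : ‖x - a‖ ≤ ‖x - b‖ := hbx ▸ norm_sub_le_farDist hbd x ha
  have htri := norm_add_le (x - a) (x - b)
  have hray : SameRay ℝ (x - a) (x - b) := sameRay_iff_norm_add.2 (by linarith)
  have hab : x - a = x - b := hray.eq_of_norm_eq (by linarith)
  rwa [← sub_right_injective hab]

theorem stmt_0 {X : Type*} [NormedAddCommGroup X] [NormedSpace ℝ X] [StrictConvexSpace ℝ X]
    (A : Set X) (hne : A.Nonempty) (hbd : Bornology.IsBounded A)
    (hur : UniquelyRemotal A) : UniquelyRemotal (closure A) := by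
  have hrem : Remotal A := fun x => by
    obtain ⟨a, ha⟩ := hur x
    exact ha ▸ Set.singleton_nonempty a
  intro x
  rw [hrem.farPoints_closure hbd x]
  exact hur x
end

section
/- Let X be a normed linear space and let A be a nonempty bounded subset of X. If A is uniquely remotal and M-compact, then the set Far(A) = {a ∈ A : a is a farthest point from some x ∈ X} is M-compact. -/
open Filter Topology

-- We use Mathlib's `derivedSet A = {x | AccPt x (𝓟 A)}` for the set of limit points.

/-- If every point has a farthest point in `A`, the farthest distance to `A` is attained
on `farSet A`. -/
theorem farDist_farSet_of_remotal {X : Type*} [NormedAddCommGroup X] {A : Set X}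
    (hbd : Bornology.IsBounded A) (hA : Remotal A) (x : X) :
    farDist x (farSet A) = farDist x A := by
  obtain ⟨a, ha⟩ := hA x
  have hbdd : BddAbove ((fun a => ‖x - a‖) '' A) := by
    obtain ⟨C, hC⟩ := hbd.exists_norm_le
    refine ⟨‖x‖ + C, ?_⟩
    rintro _ ⟨b, hb, rfl⟩
    exact (norm_sub_le x b).trans (by gcongr; exact hC b hb)
  refine IsGreatest.csSup_eq ⟨⟨a, ⟨x, ha⟩, ha.2⟩, ?_⟩
  rintro _ ⟨b, ⟨y, hb⟩, rfl⟩
  exact le_csSup hbdd ⟨b, hb.1, rfl⟩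

theorem stmt_6 {X : Type*} [NormedAddCommGroup X] [NormedSpace ℝ X]
    (A : Set X) (hne : A.Nonempty) (hbd : Bornology.IsBounded A)
    (hur : UniquelyRemotal A) (hM : MCompact A) : MCompact (farSet A) := by
  rintro a ⟨ha, x, hx⟩
  have hA : Remotal A := fun y => by
    obtain ⟨b, hb⟩ := hur y
    exact hb ▸ Set.singleton_nonempty b
  rw [farDist_farSet_of_remotal hbd hA] at hx
  refine hM a ⟨fun n => ?_, x, hx⟩
  obtain ⟨y, hy⟩ := ha n
  exact hy.1
end

section
/- Let X be a normed linear space and let A be a nonempty bounded subset of X that is uniquely remotal. If Far(A) is contained in the derived set A' of A, then D(x, A) = D(x, A') for every x ∈ X. -/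
open Filter Topology

-- We use Mathlib's `derivedSet A = {x | AccPt x (𝓟 A)}` for the set of limit points.

theorem norm_sub_le_farDist_of_mem_closure {X : Type*} [NormedAddCommGroup X] {A : Set X}
    (hbd : Bornology.IsBounded A) (x : X) {a : X} (ha : a ∈ closure A) :
    ‖x - a‖ ≤ farDist x A := by
  obtain ⟨C, hC⟩ := isBounded_iff_forall_norm_le.mp hbd
  have hbdd : BddAbove ((fun a => ‖x - a‖) '' A) := by
    refine ⟨‖x‖ + C, ?_⟩
    rintro _ ⟨b, hb, rfl⟩
    exact (norm_sub_le x b).trans (by gcongr; exact hC b hb)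
  have hclosed : IsClosed {b : X | ‖x - b‖ ≤ farDist x A} :=
    isClosed_le (by fun_prop) continuous_const
  exact closure_minimal (fun b hb => le_csSup hbdd ⟨b, hb, rfl⟩) hclosed ha

theorem stmt_8 {X : Type*} [NormedAddCommGroup X] [NormedSpace ℝ X]
    (A : Set X) (hne : A.Nonempty) (hbd : Bornology.IsBounded A)
    (hur : UniquelyRemotal A) (hfar : farSet A ⊆ derivedSet A) :
    ∀ x : X, farDist x A = farDist x (derivedSet A) := by
  intro x
  obtain ⟨a, hxa⟩ := hur x
  have ha : a ∈ farPoints x A := hxa ▸ Set.mem_singleton a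
  have ha' : a ∈ derivedSet A := hfar ⟨x, ha⟩
  have hle : ∀ r ∈ (fun b => ‖x - b‖) '' derivedSet A, r ≤ farDist x A := by
    rintro _ ⟨b, hb, rfl⟩
    exact norm_sub_le_farDist_of_mem_closure hbd x (mem_closure_iff_clusterPt.mpr hb.clusterPt)
  refine le_antisymm ?_ (csSup_le ⟨_, a, ha', rfl⟩ hle)
  rw [← ha.2]
  exact le_csSup ⟨_, hle⟩ ⟨a, ha', rfl⟩
end

section
/- Let X be a normed linear space and let A be a nonempty bounded subset of X. If A is M-compact, then the closure of A is M-compact. -/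
open Filter Topology

theorem stmt_10 {X : Type*} [NormedAddCommGroup X] [NormedSpace ℝ X]
    (A : Set X) (hne : A.Nonempty) (hbd : Bornology.IsBounded A)
    (hM : MCompact A) : MCompact (closure A) := by
  intro a ⟨ha, x, hx⟩
  have happrox : ∀ n : ℕ, ∃ b ∈ A, dist (a n) b < 1 / ((n : ℝ) + 1) := fun n =>
    Metric.mem_closure_iff.1 (ha n) _ Nat.one_div_pos_of_nat
  choose b hbA hb using happrox
  have hsub : Tendsto (fun n => a n - b n) atTop (𝓝 0) := by
    refine squeeze_zero_norm (fun n => ?_) tendsto_one_div_add_atTop_nhds_zero_nat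
    rw [← dist_eq_norm]
    exact (hb n).le
  have hnorm : Tendsto (fun n => ‖x - b n‖ - ‖x - a n‖) atTop (𝓝 0) := by
    refine squeeze_zero_norm (fun n => ?_) (tendsto_zero_iff_norm_tendsto_zero.1 hsub)
    simpa using abs_norm_sub_norm_le (x - b n) (x - a n)
  have hmax : Tendsto (fun n => ‖x - b n‖) atTop (𝓝 (farDist x A)) := by
    rw [farDist_closure hne hbd] at hx
    simpa using hnorm.add hx
  obtain ⟨φ, l, hφ, hl⟩ := hM b ⟨hbA, x, hmax⟩
  refine ⟨φ, l, hφ, ?_⟩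
  simpa [Function.comp_def] using (hsub.comp hφ.tendsto_atTop).add hl
end
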